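/- Let (Φ₁,Φ₂) be a branching mechanism, V the unique solution of the cumulant equations (3.8), and H the moment matrix. Suppose that all eigenvalues of H have strictly negative real parts. Then there exist strictly positive constants c and c₂ such that |V(t,λ)| ≤ c·|λ|·e^{−c₂ t} for all λ ∈ [0,∞)² and all t ≥ 0, where |·| denotes the Euclidean norm on ℝ². -/

import Mathlib

open MeasureTheory Filter Set

noncomputable section

/-- The state space `𝕄 = [0,∞) × ℕ`, as a subset of `ℝ²`. -/
def Mset : Set (ℝ × ℝ) := {z | 0 ≤ z.1 ∧ ∃ n : ℕ, z.2 = (n : ℝ)}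

/-- The space `𝕄₋₁ = [0,∞) × (ℕ ∪ {-1})`, as a subset of `ℝ²`. -/
def Mm1set : Set (ℝ × ℝ) := {z | 0 ≤ z.1 ∧ ∃ n : ℤ, (-1 : ℤ) ≤ n ∧ z.2 = (n : ℝ)}

/-- The data of a branching mechanism `(Φ₁, Φ₂)` of a mixed state branching process. -/
structure BranchingMechanism where
  a11 : ℝ
  a21 : ℝ
  alpha : ℝ
  a21_nonneg : 0 ≤ a21
  alpha_nonneg : 0 ≤ alpha
  n1 : Measure (ℝ × ℝ)
  n2 : Measure (ℝ × ℝ)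
  n1_sigmaFinite : SigmaFinite n1
  n2_sigmaFinite : SigmaFinite n2
  /-- `n₁` is supported on `𝕄` -/
  n1_supp : n1 Msetᶜ = 0
  /-- `n₂` is supported on `𝕄₋₁` -/
  n2_supp : n2 Mm1setᶜ = 0
  /-- `n₁` does not charge the origin -/
  n1_zero : n1 {0} = 0
  /-- `n₂` does not charge the origin -/
  n2_zero : n2 {0} = 0
  /-- `n₂([0,∞) × {-1}) < ∞` -/
  n2_neg1 : n2 {z : ℝ × ℝ | z.2 = -1} ≠ ⊤
  /-- `∫ (z₁ ∧ z₁² + z₂) n₁(dz) < ∞` -/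
  n1_moment : ∫⁻ z, ENNReal.ofReal (min z.1 (z.1 ^ 2) + z.2) ∂n1 ≠ ⊤
  /-- `∫ (z₁ + |z₂|) n₂(dz) < ∞` -/
  n2_moment : ∫⁻ z, ENNReal.ofReal (z.1 + |z.2|) ∂n2 ≠ ⊤

/-- `Φ₁(λ) = -a₁₁λ₁ - αλ₁² - ∫ (e^{-⟨λ,z⟩} - 1 + λ₁z₁) n₁(dz)`. -/
def mPhi1 (B : BranchingMechanism) (l : ℝ × ℝ) : ℝ :=
  -B.a11 * l.1 - B.alpha * l.1 ^ 2 -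
    ∫ z, (Real.exp (-(l.1 * z.1 + l.2 * z.2)) - 1 + l.1 * z.1) ∂B.n1

/-- `Φ₂(λ) = a₂₁λ₁ + ∫ (1 - e^{-⟨λ,z⟩}) n₂(dz)`. -/
def mPhi2 (B : BranchingMechanism) (l : ℝ × ℝ) : ℝ :=
  B.a21 * l.1 + ∫ z, (1 - Real.exp (-(l.1 * z.1 + l.2 * z.2))) ∂B.n2


/-- `V : t ↦ V(t,λ)` is a continuous `[0,∞)²`-valued solution of the cumulant
equations (3.8) with initial value `λ = l`. -/
def SolvesCumulant (B : BranchingMechanism) (l : ℝ × ℝ) (V : ℝ → ℝ × ℝ) : Prop :=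
  ContinuousOn V (Ici 0) ∧
  (∀ t : ℝ, 0 ≤ t → 0 ≤ (V t).1 ∧ 0 ≤ (V t).2) ∧
  (∀ t : ℝ, 0 ≤ t →
    (V t).1 = l.1 + ∫ s in (0:ℝ)..t, mPhi1 B (V s) ∧
    (V t).2 = l.2 + ∫ s in (0:ℝ)..t, mPhi2 B (V s))

/-- Entries of the moment matrix `H`. -/
def H11 (B : BranchingMechanism) : ℝ := -B.a11
def H12 (B : BranchingMechanism) : ℝ := ∫ z, z.2 ∂B.n1
def H21 (B : BranchingMechanism) : ℝ := B.a21 + ∫ z, z.1 ∂B.n2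
def H22 (B : BranchingMechanism) : ℝ := ∫ z, z.2 ∂B.n2

/-- The moment matrix `H` of a branching mechanism. -/
def Hmat (B : BranchingMechanism) : Matrix (Fin 2) (Fin 2) ℝ :=
  !![H11 B, H12 B; H21 B, H22 B]

/-!
The matrix `H` has nonnegative off-diagonal entries, and on the quadrant `(Φ₁, Φ₂)` is dominated
componentwise by the linear field `λ ↦ H λ`, because `1 - x ≤ e^{-x}`. Since the eigenvalues of `H`
lie in the open left half-plane, the row vector `w = (1, 1) adj(-H)` is strictly positive and
`w H = -det(H) (1, 1) ≤ -k w` for some `k > 0`. Hence the linear functional `⟨w, V(t, λ)⟩`, which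
is comparable to the Euclidean norm on the quadrant, decays at rate `k` by Grönwall's inequality.
-/

open scoped Matrix Topology

lemma abs_one_sub_exp_neg_le {b s : ℝ} (hb : 0 ≤ b) (hs : -b ≤ s) :
    |1 - Real.exp (-s)| ≤ Real.exp b * |s| := by
  have h_upper : 1 - Real.exp (-s) ≤ Real.exp b * |s| := calc
    1 - Real.exp (-s) ≤ |s| := by linarith [Real.one_sub_le_exp_neg s, le_abs_self s]
    _ ≤ Real.exp b * |s| := le_mul_of_one_le_left (abs_nonneg s) (Real.one_le_exp hb)
  have h_lower : Real.exp (-s) - 1 ≤ Real.exp b * |s| := calc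
    Real.exp (-s) - 1 = Real.exp (-s) * (1 - Real.exp s) := by
      rw [mul_sub, ← Real.exp_add, neg_add_cancel, Real.exp_zero, mul_one]
    _ ≤ Real.exp (-s) * |s| := by
      gcongr
      linarith [Real.add_one_le_exp s, neg_abs_le s]
    _ ≤ Real.exp b * |s| := by
      gcongr
      linarith
  exact abs_le.mpr ⟨by linarith, h_upper⟩

lemma exp_neg_sub_one_add_le_min {u : ℝ} (hu : 0 ≤ u) :
    Real.exp (-u) - 1 + u ≤ min u (u ^ 2) := by
  have h_linear : Real.exp (-u) - 1 + u ≤ u := by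
    linarith [Real.exp_le_one_iff.mpr (neg_nonpos.mpr hu)]
  refine le_min h_linear ?_
  rcases le_total u 1 with hu₁ | hu₁
  · have h_taylor := Real.abs_exp_sub_one_sub_id_le (x := -u) (by rwa [abs_neg, abs_of_nonneg hu])
    linarith [le_of_abs_le h_taylor, neg_sq u]
  · exact h_linear.trans (le_self_pow₀ hu₁ two_ne_zero)

lemma abs_exp_neg_add_sub_one_add_le {u v : ℝ} (hu : 0 ≤ u) (hv : 0 ≤ v) :
    |Real.exp (-(u + v)) - 1 + u| ≤ min u (u ^ 2) + v := by
  have h_min : 0 ≤ min u (u ^ 2) := le_min hu (sq_nonneg u)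
  have h_mono : Real.exp (-(u + v)) ≤ Real.exp (-u) := Real.exp_le_exp.mpr (by linarith)
  rw [abs_le]
  constructor
  · linarith [Real.one_sub_le_exp_neg (u + v)]
  · linarith [exp_neg_sub_one_add_le_min hu]

lemma min_mul_sq_le {R a x : ℝ} (hR : 1 ≤ R) (ha : 0 ≤ a) (haR : a ≤ R) (hx : 0 ≤ x) :
    min (a * x) ((a * x) ^ 2) ≤ R ^ 2 * min x (x ^ 2) := by
  rw [mul_min_of_nonneg _ _ (sq_nonneg R), mul_pow]
  have haR₂ : a ≤ R ^ 2 := haR.trans (le_self_pow₀ hR two_ne_zero)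
  gcongr

lemma sqrt_sq_add_sq_le_add {x y : ℝ} (hx : 0 ≤ x) (hy : 0 ≤ y) :
    Real.sqrt (x ^ 2 + y ^ 2) ≤ x + y :=
  Real.sqrt_le_iff.mpr ⟨add_nonneg hx hy, by nlinarith [mul_nonneg hx hy]⟩

lemma min_mul_sqrt_sq_add_sq_le {p q x y : ℝ} (hp : 0 ≤ p) (hq : 0 ≤ q) (hx : 0 ≤ x)
    (hy : 0 ≤ y) : min p q * Real.sqrt (x ^ 2 + y ^ 2) ≤ p * x + q * y := calc
  min p q * Real.sqrt (x ^ 2 + y ^ 2) ≤ min p q * (x + y) :=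
    mul_le_mul_of_nonneg_left (sqrt_sq_add_sq_le_add hx hy) (le_min hp hq)
  _ = min p q * x + min p q * y := mul_add _ _ _
  _ ≤ p * x + q * y := by gcongr <;> simp

lemma mul_add_mul_le_add_mul_sqrt {p q : ℝ} (hp : 0 ≤ p) (hq : 0 ≤ q) (x y : ℝ) :
    p * x + q * y ≤ (p + q) * Real.sqrt (x ^ 2 + y ^ 2) := by
  have hx : x ≤ Real.sqrt (x ^ 2 + y ^ 2) := Real.le_sqrt_of_sq_le (by linarith [sq_nonneg y])
  have hy : y ≤ Real.sqrt (x ^ 2 + y ^ 2) := Real.le_sqrt_of_sq_le (by linarith [sq_nonneg x])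
  rw [add_mul]
  gcongr

lemma continuousOn_integral_of_norm_le_mul {X α E : Type*} [TopologicalSpace X]
    [FirstCountableTopology X] [MeasurableSpace α] {μ : Measure α} [NormedAddCommGroup E]
    [NormedSpace ℝ E] {f : X → α → E} {s : Set X} {C : X → ℝ} {g : α → ℝ}
    (hf_meas : ∀ x ∈ s, AEStronglyMeasurable (f x) μ) (hC : ContinuousOn C s)
    (hg : Integrable g μ) (h_bound : ∀ x ∈ s, ∀ᵐ a ∂μ, ‖f x a‖ ≤ C x * g a)
    (hf_cont : ∀ᵐ a ∂μ, ContinuousOn (fun x ↦ f x a) s) :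
    ContinuousOn (fun x ↦ ∫ a, f x a ∂μ) s := by
  intro x hx
  have hC_near : ∀ᶠ y in 𝓝[s] x, |C y| < |C x| + 1 :=
    (hC x hx).abs.eventually_lt_const (lt_add_one _)
  refine continuousWithinAt_of_dominated (bound := fun a ↦ (|C x| + 1) * |g a|)
    (eventually_mem_nhdsWithin.mono hf_meas) ?_ (hg.abs.const_mul _)
    (hf_cont.mono fun a ha ↦ ha x hx)
  filter_upwards [hC_near, eventually_mem_nhdsWithin] with y hCy hy
  filter_upwards [h_bound y hy] with a ha
  calc ‖f y a‖ ≤ |C y * g a| := ha.trans (le_abs_self _)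
    _ = |C y| * |g a| := abs_mul _ _
    _ ≤ (|C x| + 1) * |g a| := by gcongr

lemma hasDerivWithinAt_integral_right_of_continuousOn {E : Type*} [NormedAddCommGroup E]
    [NormedSpace ℝ E] [CompleteSpace E] {g : ℝ → E} {a t : ℝ} (hg : ContinuousOn g (Ici a))
    (ht : a ≤ t) : HasDerivWithinAt (fun u ↦ ∫ s in a..u, g s) (g t) (Ici t) t := by
  have hg_int : IntervalIntegrable g volume a t :=
    (hg.mono (uIcc_of_le ht ▸ Icc_subset_Ici_self)).intervalIntegrable
  have hg_Ioi : ContinuousOn g (Ioi t) := hg.mono fun s hs ↦ ht.trans (mem_Ioi.mp hs).le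
  exact intervalIntegral.integral_hasDerivWithinAt_right hg_int
    (hg_Ioi.stronglyMeasurableAtFilter_nhdsWithin measurableSet_Ioi t)
    ((hg t ht).mono fun s hs ↦ ht.trans (mem_Ioi.mp hs).le)

lemma le_mul_exp_of_eq_add_integral {y g : ℝ → ℝ} {a y₀ K : ℝ} (hg : ContinuousOn g (Ici a))
    (hy : ∀ t, a ≤ t → y t = y₀ + ∫ s in a..t, g s) (hgy : ∀ t, a ≤ t → g t ≤ K * y t)
    {t : ℝ} (ht : a ≤ t) : y t ≤ y₀ * Real.exp (K * (t - a)) := by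
  have h_deriv : ∀ s, a ≤ s → HasDerivWithinAt (fun u ↦ y₀ + ∫ r in a..u, g r) (g s) (Ici s) s :=
    fun s hs ↦ (hasDerivWithinAt_integral_right_of_continuousOn hg hs).const_add y₀
  have h_cont : ContinuousOn (fun u ↦ y₀ + ∫ r in a..u, g r) (Icc a t) := by
    rw [← uIcc_of_le ht]
    exact continuousOn_const.add <| intervalIntegral.continuousOn_primitive_interval <|
      (hg.mono (uIcc_of_le ht ▸ Icc_subset_Ici_self)).integrableOn_uIcc
  rw [hy t ht, ← gronwallBound_ε0]
  refine le_gronwallBound_of_liminf_deriv_right_le h_cont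
    (fun s hs r hr ↦ (h_deriv s hs.1).liminf_right_slope_le hr) (by simp) (fun s hs ↦ ?_) t
    (right_mem_Icc.mpr ht)
  rw [add_zero, ← hy s hs.1]
  exact hgy s hs.1

lemma ofReal_mem_spectrum_map_of_isRoot_charpoly {n : Type*} [Fintype n] [DecidableEq n]
    {A : Matrix n n ℝ} {x : ℝ} (hx : A.charpoly.IsRoot x) :
    (x : ℂ) ∈ spectrum ℂ (A.map (Complex.ofReal ·)) := by
  have h_map : A.map (Complex.ofReal ·) = A.map Complex.ofRealHom := rfl
  rw [h_map, Matrix.mem_spectrum_iff_isRoot_charpoly, Matrix.charpoly_map]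
  exact hx.map (f := Complex.ofRealHom)

section FinTwo

variable {A : Matrix (Fin 2) (Fin 2) ℝ}

lemma isRoot_charpoly_trace_add_sqrt_discr_div_two (hA : 0 ≤ A.discr) :
    A.charpoly.IsRoot ((A.trace + Real.sqrt A.discr) / 2) := by
  have h_sqrt : Real.sqrt A.discr ^ 2 = A.trace ^ 2 - 4 * A.det := by
    rw [Real.sq_sqrt hA, Matrix.discr_fin_two]
  simp only [Matrix.charpoly_fin_two, Polynomial.IsRoot.def, Polynomial.eval_add,
    Polynomial.eval_sub, Polynomial.eval_mul, Polynomial.eval_pow, Polynomial.eval_X,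
    Polynomial.eval_C]
  linear_combination h_sqrt / 4

lemma trace_neg_and_det_pos_of_spectrum_re_neg (hA : 0 ≤ A.discr)
    (hspec : ∀ μ ∈ spectrum ℂ (A.map (Complex.ofReal ·)), μ.re < 0) :
    A.trace < 0 ∧ 0 < A.det := by
  have h_eigenvalue := hspec _ <| ofReal_mem_spectrum_map_of_isRoot_charpoly <|
    isRoot_charpoly_trace_add_sqrt_discr_div_two hA
  rw [Complex.ofReal_re] at h_eigenvalue
  have h_sqrt_nonneg : 0 ≤ Real.sqrt A.discr := Real.sqrt_nonneg _
  have h_sqrt_lt : Real.sqrt A.discr < -A.trace := by linarith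
  have h_discr_lt : A.discr < A.trace ^ 2 := calc
    A.discr = Real.sqrt A.discr ^ 2 := (Real.sq_sqrt hA).symm
    _ < (-A.trace) ^ 2 := pow_lt_pow_left₀ h_sqrt_lt h_sqrt_nonneg two_ne_zero
    _ = A.trace ^ 2 := neg_sq _
  rw [Matrix.discr_fin_two] at h_discr_lt
  constructor <;> linarith

lemma diag_neg_and_det_pos_of_spectrum_re_neg (h₀₁ : 0 ≤ A 0 1) (h₁₀ : 0 ≤ A 1 0)
    (hspec : ∀ μ ∈ spectrum ℂ (A.map (Complex.ofReal ·)), μ.re < 0) :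
    A 0 0 < 0 ∧ A 1 1 < 0 ∧ 0 < A.det := by
  have h_off : 0 ≤ A 0 1 * A 1 0 := mul_nonneg h₀₁ h₁₀
  have h_discr : A.discr = (A 0 0 - A 1 1) ^ 2 + 4 * (A 0 1 * A 1 0) := by
    rw [Matrix.discr_fin_two, Matrix.trace_fin_two, Matrix.det_fin_two]
    ring
  obtain ⟨h_trace, h_det⟩ :=
    trace_neg_and_det_pos_of_spectrum_re_neg (by rw [h_discr]; positivity) hspec
  have h_sum : A 0 0 + A 1 1 < 0 := Matrix.trace_fin_two A ▸ h_trace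
  have h_diag : 0 < A 0 0 * A 1 1 := by linarith [Matrix.det_fin_two A]
  rcases pos_and_pos_or_neg_and_neg_of_mul_pos h_diag with ⟨h₀, h₁⟩ | ⟨h₀, h₁⟩
  · linarith
  · exact ⟨h₀, h₁, h_det⟩

lemma exists_pos_vecMul_le_neg_smul (h₀₁ : 0 ≤ A 0 1) (h₁₀ : 0 ≤ A 1 0)
    (hspec : ∀ μ ∈ spectrum ℂ (A.map (Complex.ofReal ·)), μ.re < 0) :
    ∃ w : Fin 2 → ℝ, (∀ i, 0 < w i) ∧ ∃ k : ℝ, 0 < k ∧ w ᵥ* A ≤ -k • w := by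
  obtain ⟨h₀, h₁, h_det⟩ := diag_neg_and_det_pos_of_spectrum_re_neg h₀₁ h₁₀ hspec
  have hw₀ : 0 < A 1 0 - A 1 1 := by linarith
  have hw₁ : 0 < A 0 1 - A 0 0 := by linarith
  -- `w = (1, 1) adj(-A)`, so that `w A = -det(A) (1, 1)`.
  set w : Fin 2 → ℝ := ![A 1 0 - A 1 1, A 0 1 - A 0 0] with hw
  have hw_pos : ∀ i, 0 < w i := Fin.forall_fin_two.mpr ⟨hw₀, hw₁⟩
  have hw_vecMul : ∀ j, (w ᵥ* A) j = -A.det := by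
    simp only [Fin.forall_fin_two, hw, Matrix.vecMul, Matrix.vec2_dotProduct, Matrix.det_fin_two,
      Matrix.cons_val_zero, Matrix.cons_val_one]
    constructor <;> ring
  have hw_sum : 0 < ∑ i, w i := Finset.sum_pos (fun i _ ↦ hw_pos i) Finset.univ_nonempty
  refine ⟨w, hw_pos, A.det / ∑ i, w i, div_pos h_det hw_sum, fun j ↦ ?_⟩
  have hw_le : w j ≤ ∑ i, w i :=
    Finset.single_le_sum (fun i _ ↦ (hw_pos i).le) (Finset.mem_univ j)
  calc (w ᵥ* A) j = -(A.det / (∑ i, w i) * ∑ i, w i) := by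
        rw [hw_vecMul, div_mul_cancel₀ _ hw_sum.ne']
    _ ≤ -(A.det / (∑ i, w i) * w j) := by gcongr
    _ = (-(A.det / ∑ i, w i) • w) j := by rw [Pi.smul_apply, smul_eq_mul, neg_mul]

end FinTwo

namespace BranchingMechanism

variable (B : BranchingMechanism) {l : ℝ × ℝ}

lemma ae_n1_nonneg : ∀ᵐ z ∂B.n1, 0 ≤ z.1 ∧ 0 ≤ z.2 := by
  have h_supp : ∀ᵐ z ∂B.n1, z ∈ Mset := B.n1_supp
  filter_upwards [h_supp] with z ⟨hz, n, hn⟩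
  exact ⟨hz, hn ▸ n.cast_nonneg⟩

lemma ae_n2_nonneg_fst_and_neg_one_le_snd : ∀ᵐ z ∂B.n2, 0 ≤ z.1 ∧ -1 ≤ z.2 := by
  have h_supp : ∀ᵐ z ∂B.n2, z ∈ Mm1set := B.n2_supp
  filter_upwards [h_supp] with z ⟨hz, n, hn, hzn⟩
  exact ⟨hz, hzn ▸ mod_cast hn⟩

lemma integrable_min_add_snd_n1 :
    Integrable (fun z : ℝ × ℝ ↦ min z.1 (z.1 ^ 2) + z.2) B.n1 := by
  refine (lintegral_ofReal_ne_top_iff_integrable (by fun_prop) ?_).mp B.n1_moment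
  filter_upwards [B.ae_n1_nonneg] with z ⟨hz₁, hz₂⟩
  exact add_nonneg (le_min hz₁ (sq_nonneg _)) hz₂

lemma integrable_fst_add_abs_snd_n2 : Integrable (fun z : ℝ × ℝ ↦ z.1 + |z.2|) B.n2 := by
  refine (lintegral_ofReal_ne_top_iff_integrable (by fun_prop) ?_).mp B.n2_moment
  filter_upwards [B.ae_n2_nonneg_fst_and_neg_one_le_snd] with z ⟨hz₁, _⟩
  exact add_nonneg hz₁ (abs_nonneg _)

lemma integrable_snd_n1 : Integrable (fun z : ℝ × ℝ ↦ z.2) B.n1 := by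
  refine B.integrable_min_add_snd_n1.mono' (by fun_prop) ?_
  filter_upwards [B.ae_n1_nonneg] with z ⟨hz₁, hz₂⟩
  rw [Real.norm_of_nonneg hz₂]
  exact le_add_of_nonneg_left (le_min hz₁ (sq_nonneg _))

lemma integrable_fst_n2 : Integrable (fun z : ℝ × ℝ ↦ z.1) B.n2 := by
  refine B.integrable_fst_add_abs_snd_n2.mono' (by fun_prop) ?_
  filter_upwards [B.ae_n2_nonneg_fst_and_neg_one_le_snd] with z ⟨hz₁, _⟩
  rw [Real.norm_of_nonneg hz₁]
  exact le_add_of_nonneg_right (abs_nonneg _)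

lemma integrable_snd_n2 : Integrable (fun z : ℝ × ℝ ↦ z.2) B.n2 := by
  refine B.integrable_fst_add_abs_snd_n2.mono' (by fun_prop) ?_
  filter_upwards [B.ae_n2_nonneg_fst_and_neg_one_le_snd] with z ⟨hz₁, _⟩
  exact le_add_of_nonneg_left hz₁

lemma H12_nonneg : 0 ≤ H12 B :=
  integral_nonneg_of_ae (B.ae_n1_nonneg.mono fun _ hz ↦ hz.2)

lemma H21_nonneg : 0 ≤ H21 B :=
  add_nonneg B.a21_nonneg <|
    integral_nonneg_of_ae (B.ae_n2_nonneg_fst_and_neg_one_le_snd.mono fun _ hz ↦ hz.1)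

lemma ae_norm_mPhi1_integrand_le (hl : 0 ≤ l) :
    ∀ᵐ z ∂B.n1, ‖Real.exp (-(l.1 * z.1 + l.2 * z.2)) - 1 + l.1 * z.1‖
      ≤ (1 + ‖l‖) ^ 2 * (min z.1 (z.1 ^ 2) + z.2) := by
  obtain ⟨hl₁, hl₂⟩ := Prod.le_def.mp hl
  have hR : 1 ≤ 1 + ‖l‖ := le_add_of_nonneg_right (norm_nonneg l)
  have hlR₁ : l.1 ≤ 1 + ‖l‖ := by linarith [Real.le_norm_self l.1, norm_fst_le l]
  have hlR₂ : l.2 ≤ (1 + ‖l‖) ^ 2 := by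
    linarith [Real.le_norm_self l.2, norm_snd_le l, le_self_pow₀ hR two_ne_zero]
  filter_upwards [B.ae_n1_nonneg] with z ⟨hz₁, hz₂⟩
  calc ‖Real.exp (-(l.1 * z.1 + l.2 * z.2)) - 1 + l.1 * z.1‖
      ≤ min (l.1 * z.1) ((l.1 * z.1) ^ 2) + l.2 * z.2 :=
        abs_exp_neg_add_sub_one_add_le (mul_nonneg hl₁ hz₁) (mul_nonneg hl₂ hz₂)
    _ ≤ (1 + ‖l‖) ^ 2 * min z.1 (z.1 ^ 2) + (1 + ‖l‖) ^ 2 * z.2 :=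
        add_le_add (min_mul_sq_le hR hl₁ hlR₁ hz₁) (mul_le_mul_of_nonneg_right hlR₂ hz₂)
    _ = (1 + ‖l‖) ^ 2 * (min z.1 (z.1 ^ 2) + z.2) := (mul_add _ _ _).symm

lemma ae_norm_mPhi2_integrand_le (hl : 0 ≤ l) :
    ∀ᵐ z ∂B.n2, ‖1 - Real.exp (-(l.1 * z.1 + l.2 * z.2))‖
      ≤ Real.exp l.2 * ‖l‖ * (z.1 + |z.2|) := by
  obtain ⟨hl₁, hl₂⟩ := Prod.le_def.mp hl
  filter_upwards [B.ae_n2_nonneg_fst_and_neg_one_le_snd] with z ⟨hz₁, hz₂⟩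
  have h_pairing_ge : -l.2 ≤ l.1 * z.1 + l.2 * z.2 := by
    linarith [mul_nonneg hl₁ hz₁, mul_le_mul_of_nonneg_left hz₂ hl₂]
  have h_pairing_abs : |l.1 * z.1 + l.2 * z.2| ≤ ‖l‖ * (z.1 + |z.2|) := calc
    |l.1 * z.1 + l.2 * z.2| ≤ |l.1| * |z.1| + |l.2| * |z.2| := by
      simpa only [abs_mul] using abs_add_le (l.1 * z.1) (l.2 * z.2)
    _ ≤ ‖l‖ * |z.1| + ‖l‖ * |z.2| := by
      gcongr
      exacts [norm_fst_le l, norm_snd_le l]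
    _ = ‖l‖ * (z.1 + |z.2|) := by rw [abs_of_nonneg hz₁, mul_add]
  calc ‖1 - Real.exp (-(l.1 * z.1 + l.2 * z.2))‖
      ≤ Real.exp l.2 * |l.1 * z.1 + l.2 * z.2| := abs_one_sub_exp_neg_le hl₂ h_pairing_ge
    _ ≤ Real.exp l.2 * (‖l‖ * (z.1 + |z.2|)) := by gcongr
    _ = Real.exp l.2 * ‖l‖ * (z.1 + |z.2|) := (mul_assoc _ _ _).symm

lemma continuousOn_mPhi1 : ContinuousOn (mPhi1 B) (Ici 0) := by
  refine ContinuousOn.sub (by fun_prop) <|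
    continuousOn_integral_of_norm_le_mul (C := fun l ↦ (1 + ‖l‖) ^ 2) (fun l _ ↦ by fun_prop)
      (by fun_prop) B.integrable_min_add_snd_n1 (fun l hl ↦ B.ae_norm_mPhi1_integrand_le hl)
      (ae_of_all _ fun z ↦ by fun_prop)

lemma continuousOn_mPhi2 : ContinuousOn (mPhi2 B) (Ici 0) := by
  refine ContinuousOn.add (by fun_prop) <|
    continuousOn_integral_of_norm_le_mul (C := fun l ↦ Real.exp l.2 * ‖l‖) (fun l _ ↦ by fun_prop)
      (by fun_prop) B.integrable_fst_add_abs_snd_n2 (fun l hl ↦ B.ae_norm_mPhi2_integrand_le hl)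
      (ae_of_all _ fun z ↦ by fun_prop)

lemma mPhi1_le (hl : 0 ≤ l) : mPhi1 B l ≤ H11 B * l.1 + H12 B * l.2 := by
  have h_integrable :
      Integrable (fun z : ℝ × ℝ ↦ Real.exp (-(l.1 * z.1 + l.2 * z.2)) - 1 + l.1 * z.1) B.n1 :=
    (B.integrable_min_add_snd_n1.const_mul _).mono' (by fun_prop) (B.ae_norm_mPhi1_integrand_le hl)
  have h_integral : -(l.2 * H12 B)
      ≤ ∫ z, (Real.exp (-(l.1 * z.1 + l.2 * z.2)) - 1 + l.1 * z.1) ∂B.n1 := by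
    rw [H12, ← integral_const_mul, ← integral_neg]
    refine integral_mono (B.integrable_snd_n1.const_mul l.2).neg h_integrable fun z ↦ ?_
    linarith [Real.one_sub_le_exp_neg (l.1 * z.1 + l.2 * z.2)]
  rw [mPhi1, H11]
  linarith [mul_nonneg B.alpha_nonneg (sq_nonneg l.1)]

lemma mPhi2_le (hl : 0 ≤ l) : mPhi2 B l ≤ H21 B * l.1 + H22 B * l.2 := by
  have h_integrable :
      Integrable (fun z : ℝ × ℝ ↦ 1 - Real.exp (-(l.1 * z.1 + l.2 * z.2))) B.n2 :=
    (B.integrable_fst_add_abs_snd_n2.const_mul _).mono' (by fun_prop)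
      (B.ae_norm_mPhi2_integrand_le hl)
  have h_fst := B.integrable_fst_n2.const_mul l.1
  have h_snd := B.integrable_snd_n2.const_mul l.2
  have h_integral : ∫ z, (1 - Real.exp (-(l.1 * z.1 + l.2 * z.2))) ∂B.n2
      ≤ l.1 * (∫ z, z.1 ∂B.n2) + l.2 * ∫ z, z.2 ∂B.n2 := by
    rw [← integral_const_mul, ← integral_const_mul, ← integral_add h_fst h_snd]
    refine integral_mono h_integrable (h_fst.add h_snd) fun z ↦ ?_
    linarith [Real.one_sub_le_exp_neg (l.1 * z.1 + l.2 * z.2)]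
  rw [mPhi2, H21, H22]
  linarith

lemma weighted_mPhi_le (hl : 0 ≤ l) {w : Fin 2 → ℝ} {k : ℝ} (hw : 0 ≤ w)
    (hwH : w ᵥ* Hmat B ≤ k • w) :
    w 0 * mPhi1 B l + w 1 * mPhi2 B l ≤ k * (w 0 * l.1 + w 1 * l.2) := by
  obtain ⟨hl₁, hl₂⟩ := Prod.le_def.mp hl
  have h_col₀ : w 0 * H11 B + w 1 * H21 B ≤ k * w 0 := by
    simpa [Hmat, Matrix.vecMul, dotProduct, Fin.sum_univ_two] using hwH 0
  have h_col₁ : w 0 * H12 B + w 1 * H22 B ≤ k * w 1 := by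
    simpa [Hmat, Matrix.vecMul, dotProduct, Fin.sum_univ_two] using hwH 1
  calc w 0 * mPhi1 B l + w 1 * mPhi2 B l
      ≤ w 0 * (H11 B * l.1 + H12 B * l.2) + w 1 * (H21 B * l.1 + H22 B * l.2) :=
        add_le_add (mul_le_mul_of_nonneg_left (B.mPhi1_le hl) (hw 0))
          (mul_le_mul_of_nonneg_left (B.mPhi2_le hl) (hw 1))
    _ = (w 0 * H11 B + w 1 * H21 B) * l.1 + (w 0 * H12 B + w 1 * H22 B) * l.2 := by ring
    _ ≤ k * w 0 * l.1 + k * w 1 * l.2 :=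
        add_le_add (mul_le_mul_of_nonneg_right h_col₀ hl₁) (mul_le_mul_of_nonneg_right h_col₁ hl₂)
    _ = k * (w 0 * l.1 + w 1 * l.2) := by ring

end BranchingMechanism

lemma SolvesCumulant.weighted_le_mul_exp {B : BranchingMechanism} {l : ℝ × ℝ} {V : ℝ → ℝ × ℝ}
    (hV : SolvesCumulant B l V) {w : Fin 2 → ℝ} {k : ℝ} (hw : 0 ≤ w)
    (hwH : w ᵥ* Hmat B ≤ k • w) {t : ℝ} (ht : 0 ≤ t) :
    w 0 * (V t).1 + w 1 * (V t).2 ≤ (w 0 * l.1 + w 1 * l.2) * Real.exp (k * t) := by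
  obtain ⟨hV_cont, hV_nonneg, hV_eq⟩ := hV
  have hV_mapsTo : MapsTo V (Ici 0) (Ici 0) := fun s hs ↦ Prod.le_def.mpr (hV_nonneg s hs)
  have hΦ₁ : ContinuousOn (fun s ↦ mPhi1 B (V s)) (Ici 0) :=
    B.continuousOn_mPhi1.comp hV_cont hV_mapsTo
  have hΦ₂ : ContinuousOn (fun s ↦ mPhi2 B (V s)) (Ici 0) :=
    B.continuousOn_mPhi2.comp hV_cont hV_mapsTo
  have h_integral_eq : ∀ s, 0 ≤ s → w 0 * (V s).1 + w 1 * (V s).2 = (w 0 * l.1 + w 1 * l.2)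
      + ∫ r in (0 : ℝ)..s, (w 0 * mPhi1 B (V r) + w 1 * mPhi2 B (V r)) := fun s hs ↦ by
    have h_sub : uIcc 0 s ⊆ Ici 0 := uIcc_of_le hs ▸ Icc_subset_Ici_self
    rw [intervalIntegral.integral_add ((hΦ₁.mono h_sub).intervalIntegrable.const_mul _)
        ((hΦ₂.mono h_sub).intervalIntegrable.const_mul _),
      intervalIntegral.integral_const_mul, intervalIntegral.integral_const_mul,
      (hV_eq s hs).1, (hV_eq s hs).2]
    ring
  simpa only [sub_zero] using le_mul_exp_of_eq_add_integral (K := k)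
    ((hΦ₁.const_mul (w 0)).add (hΦ₂.const_mul (w 1))) h_integral_eq
    (fun s hs ↦ B.weighted_mPhi_le (hV_mapsTo hs) hw hwH) ht

/-- If all eigenvalues of `H` have strictly negative real parts, then
there are `c, c₂ > 0` with `|V(t,λ)| ≤ c |λ| e^{-c₂ t}` for all `λ ∈ [0,∞)²` and
`t ≥ 0` (Euclidean norms). -/
theorem cumulant_exponential_decay (B : BranchingMechanism)
    (V : ℝ → (ℝ × ℝ) → ℝ × ℝ)
    (hV : ∀ l : ℝ × ℝ, 0 ≤ l.1 → 0 ≤ l.2 → SolvesCumulant B l (fun t => V t l))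
    (hspec : ∀ μ : ℂ, μ ∈ spectrum ℂ ((Hmat B).map (Complex.ofReal ·)) → μ.re < 0) :
    ∃ c : ℝ, 0 < c ∧ ∃ c₂ : ℝ, 0 < c₂ ∧
      ∀ l : ℝ × ℝ, 0 ≤ l.1 → 0 ≤ l.2 → ∀ t : ℝ, 0 ≤ t →
        Real.sqrt ((V t l).1 ^ 2 + (V t l).2 ^ 2)
          ≤ c * Real.sqrt (l.1 ^ 2 + l.2 ^ 2) * Real.exp (-c₂ * t) := by
  obtain ⟨w, hw, k, hk, hwH⟩ :=
    exists_pos_vecMul_le_neg_smul (A := Hmat B) B.H12_nonneg B.H21_nonneg hspec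
  have hmin : 0 < min (w 0) (w 1) := lt_min (hw 0) (hw 1)
  refine ⟨(w 0 + w 1) / min (w 0) (w 1), div_pos (add_pos (hw 0) (hw 1)) hmin, k, hk,
    fun l hl₁ hl₂ t ht ↦ ?_⟩
  obtain ⟨hV₁, hV₂⟩ := (hV l hl₁ hl₂).2.1 t ht
  rw [div_mul_eq_mul_div, div_mul_eq_mul_div, le_div_iff₀' hmin]
  calc min (w 0) (w 1) * Real.sqrt ((V t l).1 ^ 2 + (V t l).2 ^ 2)
      ≤ w 0 * (V t l).1 + w 1 * (V t l).2 :=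
        min_mul_sqrt_sq_add_sq_le (hw 0).le (hw 1).le hV₁ hV₂
    _ ≤ (w 0 * l.1 + w 1 * l.2) * Real.exp (-k * t) :=
        (hV l hl₁ hl₂).weighted_le_mul_exp (fun i ↦ (hw i).le) hwH ht
    _ ≤ (w 0 + w 1) * Real.sqrt (l.1 ^ 2 + l.2 ^ 2) * Real.exp (-k * t) := by
        gcongr
        exact mul_add_mul_le_add_mul_sqrt (hw 0).le (hw 1).le l.1 l.2
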